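/- Geometry-invariance of the metric projection onto the constraint cone: let Σ be a symmetric positive definite real p×p matrix, β ∈ Q, and x ∈ ℝ^p. Then there exists A > 0 such that for all a₁, a₂ ≥ A, P_{Q,Σ}(a₁β + x) − a₁β = P_{Q,Σ}(a₂β + x) − a₂β; in particular the limit Θ_{Q,Σ}(β, x) = lim_{n→∞} (P_{Q,Σ}(nβ + x) − nβ) exists. -/

import Mathlib

open Matrix

/-- The metric projection `P_{C,Σ}(x) = argmin_{β ∈ C} (β - x)ᵀ Σ (β - x)`
(chosen via the axiom of choice; for `Σ` positive definite and `C` nonempty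
closed convex it is the unique minimizer). -/
noncomputable def metricProj {p : ℕ} (S : Matrix (Fin p) (Fin p) ℝ)
    (C : Set (Fin p → ℝ)) (x : Fin p → ℝ) : Fin p → ℝ :=
  Classical.epsilon fun γ => γ ∈ C ∧ ∀ β ∈ C,
    (γ - x) ⬝ᵥ S.mulVec (γ - x) ≤ (β - x) ⬝ᵥ S.mulVec (β - x)

/-- The constraint cone `Q = {β ∈ ℝ^p : β_j ≥ 0 for j = 1,…,q}`. -/
def coneQ (p q : ℕ) : Set (Fin p → ℝ) :=
  {v | ∀ j : Fin p, (j : ℕ) < q → 0 ≤ v j}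

/-!
The translates `C - aβ` of a polyhedron `C` along a recession direction `β` increase with `a`,
and their union is the polyhedron `D` cut out by the constraints of `C` that are constant along
`β`. Let `θ` be the projection of `x` onto `D`. The finitely many remaining constraints hold at
`θ + aβ` once `a` is large, and then `θ`, being optimal over `D ⊇ C - aβ`, is also the projection
of `x` onto `C - aβ`. Hence `P_C(aβ + x) - aβ = P_D(x)` for all large `a`.
-/

open Filter Set Topology

section QuadraticForm

variable {n : Type*} [Fintype n] {S : Matrix n n ℝ}

lemma exists_injective_linearMap_norm_sq_eq (hS : S.PosDef) :
    ∃ L : (n → ℝ) →ₗ[ℝ] EuclideanSpace ℝ n,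
      Function.Injective L ∧ ∀ v, v ⬝ᵥ S *ᵥ v = ‖L v‖ ^ 2 := by
  classical
  open scoped MatrixOrder in
  obtain ⟨B, rfl⟩ := CStarAlgebra.nonneg_iff_eq_star_mul_self.mp hS.posSemidef.nonneg
  let L := (WithLp.linearEquiv 2 ℝ (n → ℝ)).symm.toLinearMap ∘ₗ B.mulVecLin
  have norm_sq_eq (v : n → ℝ) : v ⬝ᵥ (star B * B) *ᵥ v = ‖L v‖ ^ 2 := by
    rw [← mulVec_mulVec, dotProduct_mulVec, star_eq_conjTranspose, vecMul_conjTranspose,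
      EuclideanSpace.real_norm_sq_eq]
    simp [L, dotProduct, sq]
  refine ⟨L, (injective_iff_map_eq_zero L).mpr fun v hv ↦ ?_, norm_sq_eq⟩
  by_contra hv0
  exact (hS.dotProduct_mulVec_pos hv0).ne' (by simpa [hv] using norm_sq_eq v)

lemma tendsto_dotProduct_mulVec_cocompact (hS : S.PosDef) :
    Tendsto (fun v ↦ v ⬝ᵥ S *ᵥ v) (cocompact (n → ℝ)) atTop := by
  obtain ⟨L, hL, norm_sq_eq⟩ := exists_injective_linearMap_norm_sq_eq hS
  have hL' : IsClosedEmbedding L := L.isClosedEmbedding_of_injective (LinearMap.ker_eq_bot.mpr hL)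
  simp only [norm_sq_eq]
  exact (tendsto_pow_atTop two_ne_zero).comp
    (tendsto_norm_cocompact_atTop.comp hL'.tendsto_cocompact)

lemma strictConvexOn_dotProduct_mulVec (hS : S.PosDef) :
    StrictConvexOn ℝ univ fun v ↦ v ⬝ᵥ S *ᵥ v := by
  refine ⟨convex_univ, fun u _ v _ huv a b ha hb hab ↦ ?_⟩
  have defect_pos : 0 < a * b * ((u - v) ⬝ᵥ S *ᵥ (u - v)) :=
    mul_pos (mul_pos ha hb) (hS.dotProduct_mulVec_pos (sub_ne_zero.mpr huv))
  have defect_eq : a • (u ⬝ᵥ S *ᵥ u) + b • (v ⬝ᵥ S *ᵥ v) -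
      (a • u + b • v) ⬝ᵥ S *ᵥ (a • u + b • v) = a * b * ((u - v) ⬝ᵥ S *ᵥ (u - v)) := by
    obtain rfl : b = 1 - a := by linarith
    simp only [mulVec_add, mulVec_sub, mulVec_smul, dotProduct_add, dotProduct_sub,
      add_dotProduct, sub_dotProduct, dotProduct_smul, smul_dotProduct, smul_eq_mul]
    ring
  linarith

end QuadraticForm

section MetricProjection

variable {n : Type*} [Fintype n] {S : Matrix n n ℝ} {C D : Set (n → ℝ)} {x γ δ : n → ℝ}

/-- `γ` is a metric projection of `x` onto `C` with respect to `S`: the property that `metricProj`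
selects, in a form that does not depend on existence or uniqueness. -/
def IsMetricProj (S : Matrix n n ℝ) (C : Set (n → ℝ)) (x γ : n → ℝ) : Prop :=
  γ ∈ C ∧ IsMinOn (fun β ↦ (β - x) ⬝ᵥ S *ᵥ (β - x)) C γ

lemma exists_isMetricProj (hS : S.PosDef) (hC : IsClosed C) (hne : C.Nonempty) (x : n → ℝ) :
    ∃ γ, IsMetricProj S C x γ := by
  obtain ⟨γ₀, hγ₀⟩ := hne
  have coercive : Tendsto (fun β ↦ (β - x) ⬝ᵥ S *ᵥ (β - x)) (cocompact _) atTop :=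
    (tendsto_dotProduct_mulVec_cocompact hS).comp
      (Homeomorph.subRight x).isClosedEmbedding.tendsto_cocompact
  have continuous_sqDist : Continuous fun β ↦ (β - x) ⬝ᵥ S *ᵥ (β - x) := by fun_prop
  exact continuous_sqDist.continuousOn.exists_isMinOn' hC hγ₀
    ((coercive.eventually_ge_atTop _).filter_mono inf_le_left)

namespace IsMetricProj

lemma unique (hS : S.PosDef) (hC : Convex ℝ C) (hγ : IsMetricProj S C x γ)
    (hδ : IsMetricProj S C x δ) : γ = δ := by
  have strictConvex : StrictConvexOn ℝ C fun β ↦ (β - x) ⬝ᵥ S *ᵥ (β - x) := by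
    simpa [Function.comp_def, sub_eq_add_neg] using
      ((strictConvexOn_dotProduct_mulVec hS).translate_left (-x)).subset (subset_univ C) hC
  exact strictConvex.eq_of_isMinOn hγ.2 hδ.2 hγ.1 hδ.1

lemma of_subset (h : IsMetricProj S D x γ) (hCD : C ⊆ D) (hγ : γ ∈ C) : IsMetricProj S C x γ :=
  ⟨hγ, h.2.on_subset hCD⟩

lemma add_right {w : n → ℝ} (h : IsMetricProj S ((· + w) ⁻¹' C) x γ) :
    IsMetricProj S C (x + w) (γ + w) := by
  refine ⟨h.1, isMinOn_iff.mpr fun β hβ ↦ ?_⟩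
  have hβw : β - w ∈ (· + w) ⁻¹' C := by simpa using hβ
  have optimal := isMinOn_iff.mp h.2 _ hβw
  rwa [sub_sub, add_comm w x, ← add_sub_add_right_eq_sub γ x w] at optimal

end IsMetricProj

lemma isMetricProj_metricProj {p : ℕ} {S : Matrix (Fin p) (Fin p) ℝ} {C : Set (Fin p → ℝ)}
    (hS : S.PosDef) (hC : IsClosed C) (hne : C.Nonempty) (x : Fin p → ℝ) :
    IsMetricProj S C x (metricProj S C x) :=
  Classical.epsilon_spec (exists_isMetricProj hS hC hne x)

end MetricProjection

section Polyhedron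

variable {E ι : Type*} [AddCommGroup E] [Module ℝ E] [TopologicalSpace E]
  {f : ι → StrongDual ℝ E} {b : ι → ℝ} {β v : E}

/-- The polyhedron cut out by the affine inequalities `b i ≤ f i v`. It is a polyhedron
in the usual sense when `ι` is finite, and merely a closed convex set otherwise. -/
def polyhedron (f : ι → StrongDual ℝ E) (b : ι → ℝ) : Set E :=
  {v | ∀ i, b i ≤ f i v}

/-- The polyhedron cut out by those inequalities of `polyhedron f b` that are constant along `β`.
If `ι` is finite and `β` is a recession direction of `C = polyhedron f b`, this is the union of the
translates `C - aβ`. -/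
def parallelPolyhedron (f : ι → StrongDual ℝ E) (b : ι → ℝ) (β : E) : Set E :=
  polyhedron (fun i : {i // f i β = 0} ↦ f i) fun i ↦ b i

lemma isClosed_polyhedron : IsClosed (polyhedron f b) := by
  simp only [polyhedron, ofPred_forall]
  exact isClosed_iInter fun i ↦ isClosed_le continuous_const (f i).continuous

lemma convex_polyhedron : Convex ℝ (polyhedron f b) := by
  simp only [polyhedron, ofPred_forall]
  exact convex_iInter fun i ↦ convex_halfSpace_ge (f i).isLinear (b i)

lemma polyhedron_subset_parallelPolyhedron : polyhedron f b ⊆ parallelPolyhedron f b β :=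
  fun _ hv i ↦ hv i

lemma preimage_add_smul_polyhedron_subset (a : ℝ) :
    (· + a • β) ⁻¹' polyhedron f b ⊆ parallelPolyhedron f b β :=
  fun v hv i ↦ by simpa [i.2] using hv i

lemma eventually_add_smul_mem_polyhedron [Finite ι] (hβ : β ∈ polyhedron f 0)
    (hv : v ∈ parallelPolyhedron f b β) : ∀ᶠ a : ℝ in atTop, v + a • β ∈ polyhedron f b := by
  refine eventually_all.mpr fun i ↦ ?_
  simp only [map_add, map_smul, smul_eq_mul]
  rcases (hβ i).eq_or_lt with hi | hi
  · have hi' : f i β = 0 := hi.symm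
    exact .of_forall fun a ↦ by simpa [hi'] using hv ⟨i, hi'⟩
  · exact (tendsto_atTop_add_const_left _ _ (tendsto_id.atTop_mul_const hi)).eventually_ge_atTop _

end Polyhedron

section GeometryInvariance

variable {p : ℕ} {ι : Type*} [Finite ι] {S : Matrix (Fin p) (Fin p) ℝ}
  {f : ι → StrongDual ℝ (Fin p → ℝ)} {b : ι → ℝ} {β : Fin p → ℝ}

lemma eventually_metricProj_polyhedron_sub_eq (hS : S.PosDef) (hne : (polyhedron f b).Nonempty)
    (hβ : β ∈ polyhedron f 0) (x : Fin p → ℝ) :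
    ∀ᶠ a : ℝ in atTop, metricProj S (polyhedron f b) (a • β + x) - a • β =
      metricProj S (parallelPolyhedron f b β) x := by
  have proj_parallel : IsMetricProj S (parallelPolyhedron f b β) x _ :=
    isMetricProj_metricProj hS isClosed_polyhedron
      (hne.mono polyhedron_subset_parallelPolyhedron) x
  filter_upwards [eventually_add_smul_mem_polyhedron hβ proj_parallel.1] with a ha
  have proj_translate : IsMetricProj S ((· + a • β) ⁻¹' polyhedron f b) x _ :=
    proj_parallel.of_subset (preimage_add_smul_polyhedron_subset a) ha
  rw [sub_eq_iff_eq_add, add_comm (a • β) x]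
  exact (isMetricProj_metricProj hS isClosed_polyhedron hne _).unique hS convex_polyhedron
    proj_translate.add_right

theorem metric_projection_geometry_invariance_general (hS : S.PosDef)
    (hne : (polyhedron f b).Nonempty) (hβ : β ∈ polyhedron f 0) (x : Fin p → ℝ) :
    (∃ A > (0 : ℝ), ∀ a₁ a₂ : ℝ, A ≤ a₁ → A ≤ a₂ →
      metricProj S (polyhedron f b) (a₁ • β + x) - a₁ • β =
        metricProj S (polyhedron f b) (a₂ • β + x) - a₂ • β) ∧
    ∃ L : Fin p → ℝ,
      Tendsto (fun n : ℕ ↦ metricProj S (polyhedron f b) ((n : ℝ) • β + x) - (n : ℝ) • β)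
        atTop (𝓝 L) := by
  have eventually_eq := eventually_metricProj_polyhedron_sub_eq hS hne hβ x
  constructor
  · obtain ⟨A, hA⟩ := ((eventually_gt_atTop 0).and eventually_eq).exists_forall_of_atTop
    exact ⟨A, (hA A le_rfl).1, fun a₁ a₂ h₁ h₂ ↦ (hA a₁ h₁).2.trans (hA a₂ h₂).2.symm⟩
  · exact ⟨_, tendsto_const_nhds.congr'
      ((tendsto_natCast_atTop_atTop.eventually eventually_eq).mono fun _ h ↦ h.symm)⟩

end GeometryInvariance

lemma coneQ_eq_polyhedron (p q : ℕ) :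
    coneQ p q =
      polyhedron (fun j : {j : Fin p // (j : ℕ) < q} ↦ ContinuousLinearMap.proj j.1) 0 := by
  ext v
  simp [coneQ, polyhedron]

/-- Geometry-invariance of the metric projection onto the constraint cone, and
existence of the limit `Θ_{Q,Σ}(β,x) = lim_n (P_{Q,Σ}(nβ + x) - nβ)`. -/
theorem metric_projection_geometry_invariance {p q : ℕ} (hq : 1 ≤ q) (hqp : q ≤ p)
    (S : Matrix (Fin p) (Fin p) ℝ) (hsymm : S.IsSymm) (hpd : S.PosDef)
    (β : Fin p → ℝ) (hβ : β ∈ coneQ p q) (x : Fin p → ℝ) :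
    (∃ A > (0:ℝ), ∀ a₁ a₂ : ℝ, A ≤ a₁ → A ≤ a₂ →
      metricProj S (coneQ p q) (a₁ • β + x) - a₁ • β =
        metricProj S (coneQ p q) (a₂ • β + x) - a₂ • β) ∧
    ∃ L : Fin p → ℝ,
      Filter.Tendsto
        (fun n : ℕ => metricProj S (coneQ p q) ((n : ℝ) • β + x) - (n : ℝ) • β)
        Filter.atTop (nhds L) := by
  rw [coneQ_eq_polyhedron] at hβ ⊢
  exact metric_projection_geometry_invariance_general hpd ⟨β, hβ⟩ hβ x
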